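/- Let 𝕏 ⊆ ℙ^n_K be a 0-dimensional locally Gorenstein scheme, 0 ≤ d ≤ r_𝕏 − 1, and σ a homogeneous trace map of degree zero of Q^h(R)/L_0. If for every p_j ∈ Supp(𝕏) every maximal p_j-subscheme 𝕐_j ⊆ 𝕏 satisfies x_0^d·(I_{𝕐_j/𝕏})_{r_𝕏} ⊄ (δ^σ_𝕏)_{r_𝕏+d}, then 𝕏 has CBP(d). In particular, if HF_{δ^σ_𝕏}(r_𝕏 + d) = 0, then 𝕏 has CBP(d). -/

import Mathlib

noncomputable section

/-! An algebraic model for a 0-dimensional subscheme `𝕏 ⊆ ℙⁿ_K` whose support avoids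
the hyperplane `Z(X₀)`.  The scheme is recorded through the local rings
`𝒪_{𝕏,p_j}` at the points `p_1, …, p_s` of its support, together with the germ map
sending a homogeneous polynomial `F` of degree `i` to the tuple of germs
`(F_{p_1}, …, F_{p_s})`; this is the degree-`i` component of the injection
`ĩ : R → Q^h(R) ≅ ∏_j 𝒪_{𝕏,p_j}[T_j, T_j⁻¹]`, where every graded component of
`Q^h(R)` is identified with `Γ = ∏_j 𝒪_{𝕏,p_j}` by dropping the powers of the `T_j`.
Since `x₀` has germ `1` at every point, the homogeneous coordinate ring
`R = P/I_𝕏` is faithfully encoded by the chain of subspaces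
`R_i ≅ V_i = germ(P_i) ⊆ Γ` (with `V_i ⊆ V_{i+1}`, and `V_i = Γ` for `i ≫ 0`). -/

/-- The data of one (fat) point of a 0-dimensional scheme: a finite local `K`-algebra. -/
structure PointData (K : Type) [Field K] : Type 1 where
  carrier : Type
  [ring : CommRing carrier]
  [alg : Algebra K carrier]
  [loc : IsLocalRing carrier]
  [findim : FiniteDimensional K carrier]

attribute [instance] PointData.ring PointData.alg PointData.loc PointData.findim

/-- A model of a 0-dimensional subscheme of `ℙⁿ_K`, no point of whose support lies
on `Z(X₀)` (coordinates being chosen so that each point has `X₀`-coordinate 1, the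
germ of `x₀` at every point is `1`). -/
structure ZeroDimScheme (K : Type) [Field K] (n : ℕ) : Type 1 where
  /-- the number of points in the support -/
  s : ℕ
  spos : 0 < s
  /-- the local rings `𝒪_{𝕏,p_j}` -/
  pt : Fin s → PointData K
  /-- the germ map: for `F` homogeneous of degree `i` this is the degree-`i`
  component of `ĩ : R → Q^h(R)`, i.e. `F ↦ (F_{p_1}, …, F_{p_s})` -/
  germ : MvPolynomial (Fin (n + 1)) K →ₐ[K] ∀ j, (pt j).carrier
  /-- the germ of `X₀` at each point is `1` -/
  germ_X0 : germ (MvPolynomial.X 0) = 1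
  /-- in all large degrees, the germ map is surjective onto `∏_j 𝒪_{𝕏,p_j}`
  (this characterizes `I_𝕏` as the full homogeneous vanishing ideal of the scheme) -/
  eventually_surj : ∃ N : ℕ, ∀ i, N ≤ i →
    Submodule.map germ.toLinearMap
      (MvPolynomial.homogeneousSubmodule (Fin (n + 1)) K i) = ⊤

namespace ZeroDimScheme

variable {K : Type} [Field K] {n : ℕ}

/-- `Γ = ∏_j 𝒪_{𝕏,p_j}`, the common model for every graded component of `Q^h(R)`. -/
abbrev Gamma (S : ZeroDimScheme K n) : Type := ∀ j, (S.pt j).carrier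

variable (S : ZeroDimScheme K n)

/-- `V i ⊆ Γ` is the image of the degree-`i` component `R_i` of the homogeneous
coordinate ring `R` under (the degree-`i` component of) `ĩ`; we identify `R_i ≅ V i`. -/
def V (i : ℕ) : Submodule K S.Gamma :=
  Submodule.map S.germ.toLinearMap
    (MvPolynomial.homogeneousSubmodule (Fin (n + 1)) K i)

/-- `R_i` for `i : ℤ` (zero in negative degrees). -/
def Vz (i : ℤ) : Submodule K S.Gamma := if 0 ≤ i then S.V i.toNat else ⊥

/-- `deg 𝕏 = Σ_j dim_K 𝒪_{𝕏,p_j}`. -/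
def degX : ℕ := Module.finrank K S.Gamma

/-- The Hilbert function `HF_𝕏(i) = dim_K R_i`. -/
def HF (i : ℕ) : ℕ := Module.finrank K (S.V i)

/-- The Hilbert function on `ℤ`. -/
def HFz (i : ℤ) : ℕ := Module.finrank K (S.Vz i)

/-- The regularity index `r_𝕏`: the least `r` with `HF_𝕏(i) = deg 𝕏` for all `i ≥ r`. -/
def rX : ℕ := sInf {r : ℕ | ∀ i, r ≤ i → S.HF i = S.degX}

/-- `κ_j = dim_K κ(p_j)`, the residue field of `𝕏` at `p_j`. -/
def kappa (j : Fin S.s) : ℕ :=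
  Module.finrank K
    ((S.pt j).carrier ⧸
      Submodule.restrictScalars K (IsLocalRing.maximalIdeal (S.pt j).carrier))

/-- `sj` is a socle element of `𝒪_{𝕏,p_j}`, i.e. `sj ∈ Ann(𝔪_{𝕏,p_j})`.  By
Proposition 1.2, the maximal `p_j`-subschemes `𝕐 ⊆ 𝕏` correspond 1-1 to the ideals
of `Γ` generated by `(0,…,0,sj,0,…,0)` with `sj` a *nonzero* socle element. -/
def IsSocle (j : Fin S.s) (sj : (S.pt j).carrier) : Prop :=
  ∀ b ∈ IsLocalRing.maximalIdeal (S.pt j).carrier, sj * b = 0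

/-- The ideal `U = ⟨(0,…,0,sj,0,…,0)⟩` of `Γ` corresponding to the maximal
`p_j`-subscheme `𝕐` determined by the socle element `sj`; one has `I_{𝕐/𝕏} = ĩ⁻¹(U)`. -/
def sepIdeal (j : Fin S.s) (sj : (S.pt j).carrier) : Submodule K S.Gamma :=
  Submodule.restrictScalars K (Ideal.span {(Pi.single j sj : S.Gamma)})

/-- The degree-`i` component `(I_{𝕐/𝕏})_i = R_i ∩ ĩ⁻¹(U)` of the ideal of the maximal
`p_j`-subscheme `𝕐` (given by the socle element `sj`) in `R`. -/
def IY (j : Fin S.s) (sj : (S.pt j).carrier) (i : ℕ) : Submodule K S.Gamma :=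
  S.V i ⊓ S.sepIdeal j sj

/-- `(I_{𝕐/𝕏})_i` for `i : ℤ`. -/
def IYz (j : Fin S.s) (sj : (S.pt j).carrier) (i : ℤ) : Submodule K S.Gamma :=
  S.Vz i ⊓ S.sepIdeal j sj

/-- The Hilbert function `HF_𝕐(i) = HF_𝕏(i) - dim_K (I_{𝕐/𝕏})_i` of the maximal
`p_j`-subscheme `𝕐` given by the socle element `sj`. -/
def HFY (j : Fin S.s) (sj : (S.pt j).carrier) (i : ℕ) : ℕ :=
  S.HF i - Module.finrank K (S.IY j sj i)

/-- `HF_𝕐` on `ℤ`. -/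
def HFYz (j : Fin S.s) (sj : (S.pt j).carrier) (i : ℤ) : ℕ :=
  S.HFz i - Module.finrank K (S.IYz j sj i)

/-- `α_{𝕐/𝕏} = min {i | (I_{𝕐/𝕏})_i ≠ 0}`. -/
def alphaY (j : Fin S.s) (sj : (S.pt j).carrier) : ℕ :=
  sInf {i : ℕ | S.IY j sj i ≠ ⊥}

/-- `μ(a) = min {i | (0,…,0,a T_j^i,0,…,0) ∈ ĩ(R)}` for `a ∈ 𝒪_{𝕏,p_j}`. -/
def mu (j : Fin S.s) (a : (S.pt j).carrier) : ℕ :=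
  sInf {i : ℕ | (Pi.single j a : S.Gamma) ∈ S.V i}

/-- `μ_{𝕐/𝕏}`, the maximal degree of a minimal separator of the maximal
`p_j`-subscheme `𝕐` given by the socle element `sj`; independently of all choices it
equals `max {μ(a·sj) | a ∈ 𝒪_{𝕏,p_j}, a·sj ≠ 0}`. -/
def muY (j : Fin S.s) (sj : (S.pt j).carrier) : ℕ :=
  sSup {m : ℕ | ∃ a : (S.pt j).carrier, a * sj ≠ 0 ∧ m = S.mu j (a * sj)}

/-- `deg_𝕏(p_j) = min {μ_{𝕐/𝕏} | 𝕐 a maximal p_j-subscheme of 𝕏}`. -/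
def degP (j : Fin S.s) : ℕ :=
  sInf {m : ℕ | ∃ sj : (S.pt j).carrier, S.IsSocle j sj ∧ sj ≠ 0 ∧ m = S.muY j sj}

/-- `𝕏` has the Cayley–Bacharach property of degree `d`: `deg_𝕏(p_j) ≥ d + 1` for all `j`. -/
def CBP (d : ℕ) : Prop := ∀ j : Fin S.s, d + 1 ≤ S.degP j

/-- `𝕏` is a Cayley–Bacharach scheme: it has `CBP(r_𝕏 - 1)`. -/
def CayleyBacharach : Prop := S.CBP (S.rX - 1)

/-- The residue class map `𝒪_{𝕏,p_j} → κ(p_j)` as a `K`-linear map. -/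
def resQ (j : Fin S.s) :
    (S.pt j).carrier →ₗ[K]
      ((S.pt j).carrier ⧸
        Submodule.restrictScalars K (IsLocalRing.maximalIdeal (S.pt j).carrier)) :=
  (Submodule.restrictScalars K (IsLocalRing.maximalIdeal (S.pt j).carrier)).mkQ

/-- The residue classes of `e 0, …, e (κ_j - 1)` form a `K`-basis of `κ(p_j)`. -/
def IsResidueBasis (j : Fin S.s) {m : ℕ} (e : Fin m → (S.pt j).carrier) : Prop :=
  LinearIndependent K (fun k => S.resQ j (e k)) ∧
    Submodule.span K (Set.range fun k => S.resQ j (e k)) = ⊤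

/-- A family `τ_j : 𝒪_{𝕏,p_j} → K` of trace maps: each `τ_j` is a generator of
`Hom_K(𝒪_{𝕏,p_j}, K)` as an `𝒪_{𝕏,p_j}`-module.  Such a family exists iff `𝕏` is
locally Gorenstein, and it induces a homogeneous trace map `σ` of degree zero of
`Q^h(R)/L₀` (componentwise). -/
def IsTraceFamily (τ : ∀ j, (S.pt j).carrier →ₗ[K] K) : Prop :=
  ∀ j, Function.Bijective
    (fun a : (S.pt j).carrier => (τ j).comp (LinearMap.mulRight K a))

/-- The total trace `Γ → K`, `y ↦ Σ_j τ_j (y_j)`; on the degree-`i` component of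
`Q^h(R)` the trace map `σ` is `q ↦ (Ttot τ q)·x₀^i`. -/
def Ttot (τ : ∀ j, (S.pt j).carrier →ₗ[K] K) : S.Gamma →ₗ[K] K :=
  ∑ j : Fin S.s, (τ j).comp (LinearMap.proj j)

/-- The degree-`k` component `(𝔠^σ_𝕏)_k ⊆ Q^h(R)_k ≅ Γ` of the Dedekind complementary
module: `g ∈ (𝔠^σ_𝕏)_k` iff `σ(g · R) ⊆ K[x₀]`, i.e. `Ttot τ (g·x) = 0` whenever
`x ∈ R_i` with `k + i < 0`. -/
def Cmod (τ : ∀ j, (S.pt j).carrier →ₗ[K] K) (k : ℤ) : Submodule K S.Gamma :=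
  ⨅ (i : ℕ) (_ : k + (i : ℤ) < 0) (x : S.Gamma) (_ : x ∈ S.V i),
    LinearMap.ker ((S.Ttot τ).comp (LinearMap.mulRight K x))

/-- The degree-`i` component `(δ^σ_𝕏)_i ⊆ Q^h(R)_i ≅ Γ` of the Dedekind different
`δ^σ_𝕏 = {f ∈ Q^h(R) | f · 𝔠^σ_𝕏 ⊆ R}`. -/
def delta (τ : ∀ j, (S.pt j).carrier →ₗ[K] K) (i : ℤ) : Submodule K S.Gamma :=
  ⨅ (k : ℤ) (g : S.Gamma) (_ : g ∈ S.Cmod τ k),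
    Submodule.comap (LinearMap.mulRight K g) (S.Vz (i + k))

/-- The Hilbert function of the Dedekind different. -/
def HFdelta (τ : ∀ j, (S.pt j).carrier →ₗ[K] K) (i : ℤ) : ℕ :=
  Module.finrank K (S.delta τ i)

/-- `𝕏` has minimal Dedekind different: `δ^σ_𝕏 = ⊕_{i ≥ 2 r_𝕏} R_i`
(recall `R_i ≅ Γ` for `i ≥ r_𝕏`). -/
def MinimalDedekind (τ : ∀ j, (S.pt j).carrier →ₗ[K] K) : Prop :=
  ∀ i : ℤ, S.delta τ i = if 2 * (S.rX : ℤ) ≤ i then ⊤ else ⊥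

/-- The degree-`i` component (`i ≥ 0`) of the conductor
`𝔉_{R̃/R} = {f ∈ R̃ | f·R̃ ⊆ R}` of `R` in `R̃ = ∏_j 𝒪_{𝕏,p_j}[T_j]`
(whose degree-`i` component is all of `Γ` for every `i ≥ 0`). -/
def cond (i : ℕ) : Submodule K S.Gamma :=
  ⨅ y : S.Gamma, Submodule.comap (LinearMap.mulRight K y) (S.V i)

/-- The conductor on `ℤ` (zero in negative degrees, where `R̃` vanishes). -/
def condZ (i : ℤ) : Submodule K S.Gamma := if 0 ≤ i then S.cond i.toNat else ⊥

/-- The degree-`i` component of the trace `tr(𝔠^σ_𝕏) = δ^σ_𝕏 · 𝔠^σ_𝕏` of the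
Dedekind complementary module. -/
def trC (τ : ∀ j, (S.pt j).carrier →ₗ[K] K) (i : ℤ) : Submodule K S.Gamma :=
  ⨆ (a : ℤ) (b : ℤ) (_ : a + b = i), S.delta τ a * S.Cmod τ b

/-- `𝕏` is nearly Gorenstein: `𝔪 ⊆ tr(𝔠^σ_𝕏)`. -/
def NearlyGorenstein (τ : ∀ j, (S.pt j).carrier →ₗ[K] K) : Prop :=
  ∀ i : ℤ, 1 ≤ i → S.Vz i ≤ S.trC τ i

/-- `𝕏` is almost Gorenstein: there is an exact sequence of graded `R`-modules
`0 → R → 𝔠^σ_𝕏(-r_𝕏) → C → 0` with `𝔪·C = 0`.  A degree-zero graded injection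
`R → 𝔠^σ_𝕏(-r_𝕏)` is multiplication by an element `g ∈ (𝔠^σ_𝕏)_{-r_𝕏}` with
`Ann_R(g) = 0`, and `𝔪·C = 0` means `𝔪 · 𝔠^σ_𝕏(-r_𝕏) ⊆ g·R`. -/
def AlmostGorenstein (τ : ∀ j, (S.pt j).carrier →ₗ[K] K) : Prop :=
  ∃ g ∈ S.Cmod τ (-(S.rX : ℤ)),
    (∀ i : ℕ, ∀ x ∈ S.V i, x * g = 0 → x = 0) ∧
    (∀ a : ℕ, 1 ≤ a → ∀ x ∈ S.V a, ∀ k : ℤ, ∀ h ∈ S.Cmod τ k,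
      x * h ∈ Submodule.map (LinearMap.mulRight K g) (S.Vz ((a : ℤ) + k + (S.rX : ℤ))))

/-- `𝕏` is arithmetically Gorenstein, i.e. `R` is a Gorenstein ring; equivalently the
canonical module is free of rank one: `𝔠^σ_𝕏 = g·R` for some `g ∈ (𝔠^σ_𝕏)_{-r_𝕏}`. -/
def ArithGorenstein (τ : ∀ j, (S.pt j).carrier →ₗ[K] K) : Prop :=
  ∃ g ∈ S.Cmod τ (-(S.rX : ℤ)),
    ∀ k : ℤ, S.Cmod τ k = Submodule.map (LinearMap.mulRight K g) (S.Vz (k + (S.rX : ℤ)))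

/-- `𝕏` is level: the socle of `R̄ = R/⟨x₀⟩` equals `R̄_{r_𝕏}`, i.e. no nonzero
homogeneous element of `R̄` of degree `< r_𝕏` is annihilated by `𝔪̄` (recall
`R̄_i ≅ V i / V (i-1)` and `x₀`-multiplication preserves germs). -/
def Level : Prop :=
  ∀ i : ℕ, i < S.rX → ∀ x ∈ S.V i,
    (∀ a : ℕ, 1 ≤ a → ∀ y ∈ S.V a, x * y ∈ S.Vz ((i : ℤ) + (a : ℤ) - 1)) →
      x ∈ S.Vz ((i : ℤ) - 1)

/-- The subspace `{x ∈ Γ | x_k = 0 for k ≠ j}` of `Γ`: the degreewise model for the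
ideal of the subscheme `𝕐_j ⊆ 𝕏` with `I_{𝕐_j} = ∩_{k ≠ j} I_k`. -/
def Wj (j : Fin S.s) : Submodule K S.Gamma :=
  ⨅ (k : Fin S.s) (_ : k ≠ j),
    LinearMap.ker (LinearMap.proj k : S.Gamma →ₗ[K] (S.pt k).carrier)

/-- `(I_{𝕐_j/𝕏})_i` for the subscheme `𝕐_j` complementary to `p_j`. -/
def IW (j : Fin S.s) (i : ℕ) : Submodule K S.Gamma := S.V i ⊓ S.Wj j

/-- The Hilbert function of the subscheme `𝕐_j` complementary to `p_j`. -/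
def HFW (j : Fin S.s) (i : ℕ) : ℕ := S.HF i - Module.finrank K (S.IW j i)

/-- `α_{𝕐_j/𝕏}` for the subscheme `𝕐_j` complementary to `p_j`. -/
def alphaW (j : Fin S.s) : ℕ := sInf {i : ℕ | S.IW j i ≠ ⊥}

/-- The subspace `{x ∈ Γ | x_k = 0 for k ∉ {j₁, j₂}}` of `Γ`: the degreewise model for
the ideal in `R` of the subscheme of the reduced scheme `𝕏` complementary to `{p_{j₁}, p_{j₂}}`. -/
def Wpair (j1 j2 : Fin S.s) : Submodule K S.Gamma :=
  ⨅ (k : Fin S.s) (_ : k ≠ j1) (_ : k ≠ j2),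
    LinearMap.ker (LinearMap.proj k : S.Gamma →ₗ[K] (S.pt k).carrier)

/-- The homogeneous vanishing ideal `I_𝕏 ⊆ P`. -/
def IX : Ideal (MvPolynomial (Fin (n + 1)) K) :=
  Ideal.span {F | (∃ i : ℕ, F ∈ MvPolynomial.homogeneousSubmodule (Fin (n + 1)) K i) ∧
    S.germ F = 0}

/-- The `n×n`-minor (Jacobian determinant with respect to `X_1, …, X_n`) of an
`n`-tuple of polynomials. -/
def jacMinor (Fs : Fin n → MvPolynomial (Fin (n + 1)) K) : MvPolynomial (Fin (n + 1)) K :=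
  Matrix.det (Matrix.of fun a b : Fin n => MvPolynomial.pderiv (Fin.succ b) (Fs a))

/-- The preimage in `P` of the Kähler different `ϑ_𝕏 ⊆ R`: the ideal generated by
`I_𝕏` together with all `n×n` minors of the Jacobian matrix of elements of `I_𝕏`. -/
def KaehlerIdeal : Ideal (MvPolynomial (Fin (n + 1)) K) :=
  S.IX ⊔ Ideal.span {m | ∃ Fs : Fin n → MvPolynomial (Fin (n + 1)) K,
    (∀ a, Fs a ∈ S.IX) ∧ m = jacMinor Fs}

/-- The degree-`i` component of the Kähler different `ϑ_𝕏 ⊆ R`, viewed inside `Γ`. -/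
def thetaPiece (i : ℕ) : Submodule K S.Gamma :=
  Submodule.map S.germ.toLinearMap
    (Submodule.restrictScalars K S.KaehlerIdeal ⊓
      MvPolynomial.homogeneousSubmodule (Fin (n + 1)) K i)

end ZeroDimScheme

end

/-! If `μ_{𝕐/𝕏} ≤ d` for some maximal `p_j`-subscheme `𝕐`, then the whole ideal of `𝕐` in
`Γ` lies in `R_d`; being an ideal of `Γ`, it lies in the degree-`d` part of the conductor
`𝔉_{R̃/R}`.  Since the trace form is nondegenerate and `R_{r_𝕏} = Γ`, the complementary
module `𝔠^σ_𝕏` vanishes in degrees below `-r_𝕏`, hence `x₀^{r_𝕏}·𝔉_{R̃/R} ⊆ δ^σ_𝕏`.  So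
the failure of `CBP(d)` forces `x₀^d·(I_{𝕐/𝕏})_{r_𝕏} ⊆ (δ^σ_𝕏)_{r_𝕏+d}` for some `𝕐`. -/

theorem exists_ne_zero_forall_mem_maximalIdeal_smul_eq_zero (R M : Type*) [CommRing R]
    [IsLocalRing R] [IsArtinianRing R] [AddCommGroup M] [Module R M] [Nontrivial M] :
    ∃ x : M, x ≠ 0 ∧ ∀ b ∈ IsLocalRing.maximalIdeal R, b • x = 0 := by
  obtain ⟨p, hp⟩ := associatedPrimes.nonempty R M
  obtain ⟨p_prime, x, p_eq⟩ := isAssociatedPrime_iff.1 hp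
  have p_eq_maximalIdeal : p = IsLocalRing.maximalIdeal R :=
    IsLocalRing.eq_maximalIdeal (IsArtinianRing.isMaximal_of_isPrime p)
  refine ⟨x, by simpa [p_eq] using p_prime.ne_top, fun b hb => ?_⟩
  rw [← p_eq_maximalIdeal, p_eq] at hb
  exact Submodule.mem_colon_singleton.1 hb

namespace ZeroDimScheme

variable {K : Type} [Field K] {n : ℕ} {S : ZeroDimScheme K n} {j : Fin S.s}
  {τ : ∀ j, (S.pt j).carrier →ₗ[K] K}

theorem exists_isSocle_ne_zero (j : Fin S.s) :
    ∃ sj : (S.pt j).carrier, S.IsSocle j sj ∧ sj ≠ 0 := by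
  have : IsArtinianRing (S.pt j).carrier := IsArtinianRing.of_finite K _
  obtain ⟨sj, sj_ne, hsj⟩ :=
    exists_ne_zero_forall_mem_maximalIdeal_smul_eq_zero (S.pt j).carrier (S.pt j).carrier
  exact ⟨sj, fun b hb => (mul_comm sj b).trans (hsj b hb), sj_ne⟩

theorem V_mono (S : ZeroDimScheme K n) : Monotone S.V := by
  refine monotone_nat_of_le_succ fun i => ?_
  rintro _ ⟨F, hF, rfl⟩
  exact ⟨F * MvPolynomial.X 0, hF.mul (MvPolynomial.isHomogeneous_X K 0), by simp [S.germ_X0]⟩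

theorem V_rX (S : ZeroDimScheme K n) : S.V S.rX = ⊤ := by
  have regular : {r : ℕ | ∀ i, r ≤ i → S.HF i = S.degX}.Nonempty := by
    obtain ⟨N, hN⟩ := S.eventually_surj
    refine ⟨N, fun i hi => ?_⟩
    rw [HF, V, hN i hi, finrank_top, degX]
  exact Submodule.eq_top_of_finrank_eq (Nat.sInf_mem regular S.rX le_rfl)

theorem V_le_Vz {i : ℕ} {k : ℤ} (hik : (i : ℤ) ≤ k) : S.V i ≤ S.Vz k := by
  rw [Vz, if_pos (by omega)]
  exact S.V_mono (by omega)

theorem mem_cond {i : ℕ} {x : S.Gamma} : x ∈ S.cond i ↔ ∀ y, x * y ∈ S.V i := by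
  simp only [cond, Submodule.mem_iInf, Submodule.mem_comap, LinearMap.mulRight_apply]

theorem mem_Cmod {k : ℤ} {g : S.Gamma} :
    g ∈ S.Cmod τ k ↔ ∀ i : ℕ, k + i < 0 → ∀ x ∈ S.V i, S.Ttot τ (g * x) = 0 := by
  simp only [Cmod, Submodule.mem_iInf, LinearMap.mem_ker, LinearMap.comp_apply,
    LinearMap.mulRight_apply]

theorem mem_delta {i : ℤ} {x : S.Gamma} :
    x ∈ S.delta τ i ↔ ∀ k, ∀ g ∈ S.Cmod τ k, x * g ∈ S.Vz (i + k) := by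
  simp only [delta, Submodule.mem_iInf, Submodule.mem_comap, LinearMap.mulRight_apply]

theorem Ttot_single (τ : ∀ j, (S.pt j).carrier →ₗ[K] K) (j : Fin S.s)
    (a : (S.pt j).carrier) : S.Ttot τ (Pi.single j a) = τ j a := by
  simp only [Ttot, LinearMap.sum_apply, LinearMap.comp_apply, LinearMap.proj_apply]
  rw [Finset.sum_eq_single_of_mem j (Finset.mem_univ j), Pi.single_eq_same]
  intro k _ hkj
  rw [Pi.single_eq_of_ne hkj, map_zero]

theorem IsTraceFamily.eq_zero_of_forall_Ttot_mul_eq_zero (hτ : S.IsTraceFamily τ)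
    {g : S.Gamma} (hg : ∀ x, S.Ttot τ (g * x) = 0) : g = 0 := by
  funext j
  refine (hτ j).injective (LinearMap.ext fun b => ?_)
  have trace_eq_zero : τ j (b * g j) = 0 := by
    rw [← Ttot_single, mul_comm, Pi.single_mul_right, hg]
  simpa using trace_eq_zero

theorem IsTraceFamily.Cmod_eq_bot (hτ : S.IsTraceFamily τ) {k : ℤ} (hk : k < -S.rX) :
    S.Cmod τ k = ⊥ := by
  refine (Submodule.eq_bot_iff _).2 fun g hg =>
    hτ.eq_zero_of_forall_Ttot_mul_eq_zero fun x => ?_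
  exact mem_Cmod.1 hg S.rX (by omega) x (S.V_rX ▸ Submodule.mem_top)

theorem IsTraceFamily.cond_le_delta (hτ : S.IsTraceFamily τ) (i : ℕ) :
    S.cond i ≤ S.delta τ (S.rX + i) := by
  refine fun x hx => mem_delta.2 fun k g hg => ?_
  obtain hk | hk := lt_or_ge k (-S.rX)
  · rw [hτ.Cmod_eq_bot hk, Submodule.mem_bot] at hg
    rw [hg, mul_zero]
    exact zero_mem _
  · exact V_le_Vz (by omega) (mem_cond.1 hx g)

theorem mem_sepIdeal {sj : (S.pt j).carrier} {x : S.Gamma} :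
    x ∈ S.sepIdeal j sj ↔ ∃ a, Pi.single j (a * sj) = x := by
  rw [sepIdeal, Submodule.restrictScalars_mem, Ideal.mem_span_singleton']
  constructor
  · rintro ⟨c, rfl⟩
    exact ⟨c j, Pi.single_mul_right _⟩
  · rintro ⟨a, rfl⟩
    exact ⟨Pi.single j a, (Pi.single_mul ..).symm⟩

theorem sepIdeal_eq_bot {sj : (S.pt j).carrier} : S.sepIdeal j sj = ⊥ ↔ sj = 0 := by
  rw [sepIdeal, Submodule.restrictScalars_eq_bot_iff, Ideal.span_singleton_eq_bot,
    Pi.single_eq_zero_iff]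

theorem IY_rX (j : Fin S.s) (sj : (S.pt j).carrier) : S.IY j sj S.rX = S.sepIdeal j sj := by
  rw [IY, V_rX, top_inf_eq]

theorem single_mem_V_rX (j : Fin S.s) (a : (S.pt j).carrier) :
    (Pi.single j a : S.Gamma) ∈ S.V S.rX :=
  S.V_rX ▸ Submodule.mem_top

theorem mu_le_rX (j : Fin S.s) (a : (S.pt j).carrier) : S.mu j a ≤ S.rX :=
  Nat.sInf_le (single_mem_V_rX j a)

theorem single_mem_V_mu (j : Fin S.s) (a : (S.pt j).carrier) :
    (Pi.single j a : S.Gamma) ∈ S.V (S.mu j a) :=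
  Nat.sInf_mem (s := {i | (Pi.single j a : S.Gamma) ∈ S.V i}) ⟨S.rX, single_mem_V_rX j a⟩

theorem mu_mul_le_muY {a sj : (S.pt j).carrier} (ha : a * sj ≠ 0) :
    S.mu j (a * sj) ≤ S.muY j sj := by
  refine le_csSup ⟨S.rX, ?_⟩ ⟨a, ha, rfl⟩
  rintro _ ⟨b, -, rfl⟩
  exact mu_le_rX j (b * sj)

theorem single_mul_mem_V_muY (a sj : (S.pt j).carrier) :
    (Pi.single j (a * sj) : S.Gamma) ∈ S.V (S.muY j sj) := by
  by_cases ha : a * sj = 0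
  · rw [ha, Pi.single_zero]
    exact zero_mem _
  · exact S.V_mono (mu_mul_le_muY ha) (single_mem_V_mu j (a * sj))

theorem sepIdeal_le_cond {sj : (S.pt j).carrier} {d : ℕ} (hd : S.muY j sj ≤ d) :
    S.sepIdeal j sj ≤ S.cond d := by
  intro x hx
  obtain ⟨a, rfl⟩ := mem_sepIdeal.1 hx
  refine mem_cond.2 fun y => S.V_mono hd ?_
  rw [← Pi.single_mul_left, mul_right_comm]
  exact single_mul_mem_V_muY (a * y j) sj

theorem CBP_iff {d : ℕ} :
    S.CBP d ↔ ∀ (j : Fin S.s) (sj : (S.pt j).carrier),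
      S.IsSocle j sj → sj ≠ 0 → d < S.muY j sj := by
  refine forall_congr' fun j => ?_
  have nonempty : {m | ∃ sj, S.IsSocle j sj ∧ sj ≠ 0 ∧ m = S.muY j sj}.Nonempty := by
    obtain ⟨sj, hsj, sj_ne⟩ := exists_isSocle_ne_zero j
    exact ⟨_, sj, hsj, sj_ne, rfl⟩
  rw [degP, le_csInf_iff (OrderBot.bddBelow _) nonempty]
  constructor
  · exact fun h sj hsj sj_ne => h _ ⟨sj, hsj, sj_ne, rfl⟩
  · rintro h _ ⟨sj, hsj, sj_ne, rfl⟩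
    exact h sj hsj sj_ne

theorem IsTraceFamily.IY_rX_le_delta (hτ : S.IsTraceFamily τ) {sj : (S.pt j).carrier} {d : ℕ}
    (hd : S.muY j sj ≤ d) : S.IY j sj S.rX ≤ S.delta τ (S.rX + d) :=
  calc S.IY j sj S.rX = S.sepIdeal j sj := IY_rX j sj
    _ ≤ S.cond d := sepIdeal_le_cond hd
    _ ≤ S.delta τ (S.rX + d) := hτ.cond_le_delta d

end ZeroDimScheme

/-- Proposition 4.10 / `propSec3.10`.  Let `𝕏 ⊆ ℙⁿ_K` be a
0-dimensional locally Gorenstein scheme, `0 ≤ d ≤ r_𝕏 - 1`, and `σ` a homogeneous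
trace map of degree zero of `Q^h(R)/L₀`.  If for every `p_j ∈ Supp 𝕏` every maximal
`p_j`-subscheme `𝕐_j ⊆ 𝕏` satisfies `x₀^d·(I_{𝕐_j/𝕏})_{r_𝕏} ⊄ (δ^σ_𝕏)_{r_𝕏+d}`,
then `𝕏` has `CBP(d)`.  In particular, if `HF_{δ^σ_𝕏}(r_𝕏 + d) = 0` then `𝕏` has
`CBP(d)`.  (Under the degreewise identification, the subspace
`x₀^d·(I_{𝕐_j/𝕏})_{r_𝕏}` of the degree-`r_𝕏+d` part of `Q^h(R)` is
`(I_{𝕐_j/𝕏})_{r_𝕏} ⊆ Γ`.) -/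
theorem dedekind_CB_stmt8 (K : Type) [Field K] (n : ℕ) (S : ZeroDimScheme K n)
    (τ : ∀ j, (S.pt j).carrier →ₗ[K] K) (hτ : S.IsTraceFamily τ)
    (d : ℕ) (hd : d + 1 ≤ S.rX) :
    ((∀ (j : Fin S.s) (sj : (S.pt j).carrier), S.IsSocle j sj → sj ≠ 0 →
        ¬ (S.IY j sj S.rX ≤ S.delta τ ((S.rX : ℤ) + (d : ℤ)))) → S.CBP d) ∧
    (S.HFdelta τ ((S.rX : ℤ) + (d : ℤ)) = 0 → S.CBP d) := by
  constructor
  · intro not_le_delta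
    refine ZeroDimScheme.CBP_iff.2 fun j sj hsj sj_ne => lt_of_not_ge fun hmu => ?_
    exact not_le_delta j sj hsj sj_ne (hτ.IY_rX_le_delta hmu)
  · intro HFdelta_eq_zero
    have delta_eq_bot : S.delta τ (S.rX + d) = ⊥ := Submodule.finrank_eq_zero.1 HFdelta_eq_zero
    refine ZeroDimScheme.CBP_iff.2 fun j sj _ sj_ne => lt_of_not_ge fun hmu => sj_ne ?_
    have IY_le_bot := delta_eq_bot ▸ hτ.IY_rX_le_delta hmu
    rwa [ZeroDimScheme.IY_rX, le_bot_iff, ZeroDimScheme.sepIdeal_eq_bot] at IY_le_bot
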